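/- For every ε > 0 there exists K > 0 such that for all k ∈ ℂ with |k| ≥ K and all x ∈ [0,ℓ] one has |c(x,k) − cos(kx) − (sin(kx)/k)·(1/2)∫₀ˣ q(t) dt − (cos(kx)/k²)·[ (1/4)(q(x) − q(0)) − (1/8)(∫₀ˣ q(t) dt)² ]| ≤ ε · e^{|Im k| x} / |k|². -/

import Mathlib

open MeasureTheory intervalIntegral Real

/-!
Insert `A = cos (k x) + (sin (k x) / k) (1/2) ∫₀ˣ q` into the Volterra operator. The product
formulas for `sin (k (x - t))` against `cos (k t)` and `sin (k t)` separate the non-oscillating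
part from integrals with kernels `sin (k (x - 2 t))` and `cos (k (x - 2 t))`. One integration by
parts in the first of these integrals, which is where `q'` enters, gives the `cos (k x) / k²` term
and leaves an integral of `cos (k (x - 2 t))` against an `L¹` density. A Riemann–Lebesgue lemma,
uniform in `x` with weight `exp (|Im k| x)`, makes that integral negligible: approximate the density
in `L¹` by smooth functions and integrate by parts. The residual `u - A` solves a Volterra equation
whose operator has norm `O(1 / |k|)` in the same weighted sup norm, so it is `O(k⁻²)`, and its image
under the operator is `O(k⁻³)`.
-/

open scoped ContDiff

section Primitive

variable {E : Type*} [NormedAddCommGroup E] [NormedSpace ℝ E] {f f' : ℝ → E} {a b : ℝ}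

theorem absolutelyContinuousOnInterval_of_dist_le {X Y : Type*} [PseudoMetricSpace X]
    [PseudoMetricSpace Y] {f : ℝ → X} {g : ℝ → Y} (hg : AbsolutelyContinuousOnInterval g a b)
    (hfg : ∀ x ∈ Set.uIcc a b, ∀ y ∈ Set.uIcc a b, dist (f x) (f y) ≤ dist (g x) (g y)) :
    AbsolutelyContinuousOnInterval f a b := by
  refine squeeze_zero' (.of_forall fun _ => Finset.sum_nonneg fun _ _ => dist_nonneg) ?_ hg
  rw [Filter.eventually_inf_principal]
  filter_upwards with I hI
  exact Finset.sum_le_sum fun i hi => hfg _ (hI.1 i hi).1 _ (hI.1 i hi).2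

theorem absolutelyContinuousOnInterval_integral (hf : IntervalIntegrable f volume a b) :
    AbsolutelyContinuousOnInterval (fun x => ∫ t in a..x, f t) a b := by
  refine absolutelyContinuousOnInterval_of_dist_le
    (hf.norm.absolutelyContinuousOnInterval_intervalIntegral Set.left_mem_uIcc) fun x hx y hy => ?_
  have integrableTo {z : ℝ} (hz : z ∈ Set.uIcc a b) : IntervalIntegrable f volume a z :=
    hf.mono_set (Set.uIcc_subset_uIcc_left hz)
  rw [dist_eq_norm, dist_eq_norm,
    integral_interval_sub_left (integrableTo hx) (integrableTo hy),
    integral_interval_sub_left (integrableTo hx).norm (integrableTo hy).norm]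
  exact norm_integral_le_abs_integral_norm

/-- `f` is a primitive on `[a, b]` of the interval integrable function `f'`; equivalently, `f`
belongs to `W^{1,1}` on `[a, b]` and has weak derivative `f'`. -/
structure IsPrimitiveOn (f f' : ℝ → E) (a b : ℝ) : Prop where
  intervalIntegrable : IntervalIntegrable f' volume a b
  eq_add_integral : ∀ x ∈ Set.uIcc a b, f x = f a + ∫ t in a..x, f' t

namespace IsPrimitiveOn

theorem integral_left (hf : IntervalIntegrable f volume a b) :
    IsPrimitiveOn (fun x => ∫ t in a..x, f t) f a b :=
  ⟨hf, fun x _ => by simp⟩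

theorem of_hasDerivAt [CompleteSpace E] (hf : ∀ x, HasDerivAt f (f' x) x) (hf' : Continuous f') :
    IsPrimitiveOn f f' a b where
  intervalIntegrable := hf'.intervalIntegrable a b
  eq_add_integral x _ := by
    rw [integral_eq_sub_of_hasDerivAt (fun t _ => hf t) (hf'.intervalIntegrable a x)]
    abel

theorem of_ae_hasDerivAt [CompleteSpace E] (hf : AbsolutelyContinuousOnInterval f a b)
    (hf' : IntervalIntegrable f' volume a b)
    (hderiv : ∀ᵐ x, x ∈ Set.uIcc a b → HasDerivAt f (f' x) x) : IsPrimitiveOn f f' a b where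
  intervalIntegrable := hf'
  eq_add_integral x hx := by
    obtain ⟨C, hC⟩ :=
      (hf.fun_sub (absolutelyContinuousOnInterval_integral hf')).const_of_ae_hasDerivAt_zero <| by
        filter_upwards [hderiv, hf'.ae_hasDerivAt_integral] with y hy hy' hmem
        simpa using (hy hmem).fun_sub (hy' hmem a Set.left_mem_uIcc)
    have hCa : f a = C := by simpa using hC a Set.left_mem_uIcc
    rw [hCa, ← hC x hx, sub_add_cancel]

theorem mono (h : IsPrimitiveOn f f' a b) {x : ℝ} (hx : x ∈ Set.uIcc a b) :
    IsPrimitiveOn f f' a x where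
  intervalIntegrable := h.intervalIntegrable.mono_set (Set.uIcc_subset_uIcc_left hx)
  eq_add_integral y hy := h.eq_add_integral y (Set.uIcc_subset_uIcc_left hx hy)

theorem absolutelyContinuousOnInterval (h : IsPrimitiveOn f f' a b) :
    AbsolutelyContinuousOnInterval f a b := by
  refine absolutelyContinuousOnInterval_of_dist_le
    (absolutelyContinuousOnInterval_integral h.intervalIntegrable) fun x hx y hy => ?_
  rw [h.eq_add_integral x hx, h.eq_add_integral y hy, dist_add_left]

theorem continuousOn (h : IsPrimitiveOn f f' a b) : ContinuousOn f (Set.uIcc a b) :=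
  h.absolutelyContinuousOnInterval.continuousOn

theorem ae_hasDerivAt [CompleteSpace E] (h : IsPrimitiveOn f f' a b) :
    ∀ᵐ x, x ∈ Set.uIcc a b → HasDerivAt f (f' x) x := by
  filter_upwards [h.intervalIntegrable.ae_hasDerivAt_integral, Measure.ae_ne volume a,
    Measure.ae_ne volume b] with x hx hxa hxb hmem
  have hnhds : Set.uIcc a b ∈ nhds x := by
    refine Icc_mem_nhds (lt_of_le_of_ne hmem.1 ?_) (lt_of_le_of_ne hmem.2 ?_) <;> grind
  refine ((hx hmem a Set.left_mem_uIcc).const_add (f a)).congr_of_eventuallyEq ?_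
  filter_upwards [hnhds] with y hy using h.eq_add_integral y hy

theorem ofReal {f f' : ℝ → ℝ} (h : IsPrimitiveOn f f' a b) :
    IsPrimitiveOn (fun t => (f t : ℂ)) (fun t => (f' t : ℂ)) a b where
  intervalIntegrable := ⟨h.intervalIntegrable.1.ofReal, h.intervalIntegrable.2.ofReal⟩
  eq_add_integral x hx := by
    rw [h.eq_add_integral x hx, Complex.ofReal_add, intervalIntegral.integral_ofReal]

variable [CompleteSpace E] {𝕜 : Type*} [NontriviallyNormedField 𝕜] [NormedAlgebra ℝ 𝕜]
  [CompleteSpace 𝕜] [NormedSpace 𝕜 E] [IsScalarTower ℝ 𝕜 E] {u u' : ℝ → 𝕜}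

theorem smul (hu : IsPrimitiveOn u u' a b) (hf : IsPrimitiveOn f f' a b) :
    IsPrimitiveOn (fun t => u t • f t) (fun t => u t • f' t + u' t • f t) a b := by
  refine of_ae_hasDerivAt
    (hu.absolutelyContinuousOnInterval.fun_smul hf.absolutelyContinuousOnInterval)
    ((hf.intervalIntegrable.continuousOn_smul hu.continuousOn).add
      (hu.intervalIntegrable.smul_continuousOn hf.continuousOn)) ?_
  filter_upwards [hu.ae_hasDerivAt, hf.ae_hasDerivAt] with x hux hfx hmem
  exact (hux hmem).smul (hfx hmem)

theorem integral_deriv_smul (hu : IsPrimitiveOn u u' a b) (hf : IsPrimitiveOn f f' a b) :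
    ∫ t in a..b, u' t • f t = u b • f b - u a • f a - ∫ t in a..b, u t • f' t := by
  have hprod := (hu.smul hf).eq_add_integral b Set.right_mem_uIcc
  rw [intervalIntegral.integral_add
    (hf.intervalIntegrable.continuousOn_smul hu.continuousOn)
    (hu.intervalIntegrable.smul_continuousOn hf.continuousOn)] at hprod
  rw [hprod]
  abel

end IsPrimitiveOn

end Primitive

section Oscillation

open Bornology Filter

theorem norm_exp_mul_I_le (z : ℂ) : ‖Complex.exp (z * Complex.I)‖ ≤ exp |z.im| := by
  rw [Complex.norm_exp, Complex.mul_I_re]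
  exact exp_le_exp.2 (neg_le_abs z.im)

theorem norm_exp_neg_mul_I_le (z : ℂ) : ‖Complex.exp (-z * Complex.I)‖ ≤ exp |z.im| := by
  simpa only [Complex.neg_im, abs_neg] using norm_exp_mul_I_le (-z)

theorem norm_sin_le_exp_abs_im (z : ℂ) : ‖Complex.sin z‖ ≤ exp |z.im| := by
  rw [Complex.sin, norm_div, norm_mul, Complex.norm_I, Complex.norm_ofNat]
  linarith [norm_sub_le (Complex.exp (-z * Complex.I)) (Complex.exp (z * Complex.I)),
    norm_exp_mul_I_le z, norm_exp_neg_mul_I_le z]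

theorem norm_cos_le_exp_abs_im (z : ℂ) : ‖Complex.cos z‖ ≤ exp |z.im| := by
  rw [Complex.cos, norm_div, Complex.norm_ofNat]
  linarith [norm_add_le (Complex.exp (z * Complex.I)) (Complex.exp (-z * Complex.I)),
    norm_exp_mul_I_le z, norm_exp_neg_mul_I_le z]

theorem abs_im_mul_ofReal_le (k : ℂ) {y x : ℝ} (hy : |y| ≤ x) : |(k * y).im| ≤ |k.im| * x := by
  rw [Complex.im_mul_ofReal, abs_mul]
  gcongr

theorem norm_sin_mul_ofReal_le (k : ℂ) {y x : ℝ} (hy : |y| ≤ x) :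
    ‖Complex.sin (k * y)‖ ≤ exp (|k.im| * x) :=
  (norm_sin_le_exp_abs_im _).trans (exp_le_exp.2 (abs_im_mul_ofReal_le k hy))

theorem norm_cos_mul_ofReal_le (k : ℂ) {y x : ℝ} (hy : |y| ≤ x) :
    ‖Complex.cos (k * y)‖ ≤ exp (|k.im| * x) :=
  (norm_cos_le_exp_abs_im _).trans (exp_le_exp.2 (abs_im_mul_ofReal_le k hy))

theorem abs_sub_two_mul_le {x t : ℝ} (ht : t ∈ Set.Icc 0 x) : |x - 2 * t| ≤ x := by
  rw [abs_le]
  constructor <;> linarith [ht.1, ht.2]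

theorem norm_intervalIntegral_smul_le {𝕜 E : Type*} [NormedField 𝕜] [NormedAddCommGroup E]
    [NormedSpace ℝ E] [NormedSpace 𝕜 E] {u : ℝ → 𝕜} {f : ℝ → E} {a b C : ℝ} (hab : a ≤ b)
    (hf : IntervalIntegrable f volume a b) (hu : ∀ t ∈ Set.Ioc a b, ‖u t‖ ≤ C) :
    ‖∫ t in a..b, u t • f t‖ ≤ C * ∫ t in a..b, ‖f t‖ := by
  rw [← intervalIntegral.integral_const_mul]
  refine norm_integral_le_of_norm_le hab (.of_forall fun t ht => ?_) (hf.norm.const_mul C)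
  rw [norm_smul]
  gcongr
  exact hu t ht

theorem integral_norm_le_of_mem_Icc {E : Type*} [NormedAddCommGroup E] {f : ℝ → E} {a b x : ℝ}
    (hf : IntervalIntegrable f volume a b) (hx : x ∈ Set.Icc a b) :
    ∫ t in a..x, ‖f t‖ ≤ ∫ t in a..b, ‖f t‖ :=
  integral_mono_interval le_rfl hx.1 hx.2 (.of_forall fun _ => norm_nonneg _) hf.norm

variable {E : Type*} [NormedAddCommGroup E] [NormedSpace ℂ E] [CompleteSpace E]
  {f f' : ℝ → E} {x : ℝ}

theorem hasDerivAt_mul_sub_two_mul (k : ℂ) (x t : ℝ) :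
    HasDerivAt (fun t : ℝ => k * ((x - 2 * t : ℝ) : ℂ)) (-(2 * k)) t := by
  have h := (((hasDerivAt_id t).const_mul 2).const_sub x).ofReal_comp.const_mul k
  refine h.congr_deriv ?_
  push_cast
  ring

theorem hasDerivAt_sin_mul_sub_two_mul (k : ℂ) (x t : ℝ) :
    HasDerivAt (fun t : ℝ => Complex.sin (k * ((x - 2 * t : ℝ) : ℂ)))
      (-(2 * k) * Complex.cos (k * ((x - 2 * t : ℝ) : ℂ))) t :=
  ((Complex.hasDerivAt_sin _).comp t (hasDerivAt_mul_sub_two_mul k x t)).congr_deriv (by ring)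

theorem hasDerivAt_cos_mul_sub_two_mul (k : ℂ) (x t : ℝ) :
    HasDerivAt (fun t : ℝ => Complex.cos (k * ((x - 2 * t : ℝ) : ℂ)))
      (2 * k * Complex.sin (k * ((x - 2 * t : ℝ) : ℂ))) t :=
  ((Complex.hasDerivAt_cos _).comp t (hasDerivAt_mul_sub_two_mul k x t)).congr_deriv (by ring)

theorem two_mul_smul_integral_cos_smul (k : ℂ) (hf : IsPrimitiveOn f f' 0 x) :
    (2 * k) • ∫ t in (0 : ℝ)..x, Complex.cos (k * ((x - 2 * t : ℝ) : ℂ)) • f t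
      = Complex.sin (k * x) • (f x + f 0)
        + ∫ t in (0 : ℝ)..x, Complex.sin (k * ((x - 2 * t : ℝ) : ℂ)) • f' t := by
  have hparts := (IsPrimitiveOn.of_hasDerivAt (hasDerivAt_sin_mul_sub_two_mul k x)
    (by fun_prop)).integral_deriv_smul hf
  have hends : x - 2 * x = -x ∧ x - 2 * 0 = x := ⟨by ring, by ring⟩
  simp only [neg_mul, neg_smul, mul_smul, intervalIntegral.integral_neg,
    intervalIntegral.integral_smul, hends, Complex.ofReal_neg, mul_neg, Complex.sin_neg] at hparts
  rw [mul_smul, ← neg_inj, hparts, smul_add]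
  abel

theorem two_mul_smul_integral_sin_smul (k : ℂ) (hf : IsPrimitiveOn f f' 0 x) :
    (2 * k) • ∫ t in (0 : ℝ)..x, Complex.sin (k * ((x - 2 * t : ℝ) : ℂ)) • f t
      = Complex.cos (k * x) • (f x - f 0)
        - ∫ t in (0 : ℝ)..x, Complex.cos (k * ((x - 2 * t : ℝ) : ℂ)) • f' t := by
  have hparts := (IsPrimitiveOn.of_hasDerivAt (hasDerivAt_cos_mul_sub_two_mul k x)
    (by fun_prop)).integral_deriv_smul hf
  have hends : x - 2 * x = -x ∧ x - 2 * 0 = x := ⟨by ring, by ring⟩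
  simp only [mul_smul, intervalIntegral.integral_smul, hends, Complex.ofReal_neg, mul_neg,
    Complex.cos_neg] at hparts
  rw [mul_smul, hparts, smul_sub]

theorem two_mul_norm_mul_norm_integral_cos_smul_le (k : ℂ) (hx : 0 ≤ x)
    (hf : IsPrimitiveOn f f' 0 x) :
    2 * ‖k‖ * ‖∫ t in (0 : ℝ)..x, Complex.cos (k * ((x - 2 * t : ℝ) : ℂ)) • f t‖
      ≤ (‖f x‖ + ‖f 0‖ + ∫ t in (0 : ℝ)..x, ‖f' t‖) * exp (|k.im| * x) := by
  have hsin : ‖Complex.sin (k * x)‖ ≤ exp (|k.im| * x) :=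
    norm_sin_mul_ofReal_le k (abs_of_nonneg hx).le
  have hint := norm_intervalIntegral_smul_le hx hf.intervalIntegrable (C := exp (|k.im| * x))
    (u := fun t => Complex.sin (k * ((x - 2 * t : ℝ) : ℂ))) fun t ht =>
      norm_sin_mul_ofReal_le k (abs_sub_two_mul_le ⟨ht.1.le, ht.2⟩)
  calc 2 * ‖k‖ * ‖∫ t in (0 : ℝ)..x, Complex.cos (k * ((x - 2 * t : ℝ) : ℂ)) • f t‖
      = ‖Complex.sin (k * x) • (f x + f 0)
          + ∫ t in (0 : ℝ)..x, Complex.sin (k * ((x - 2 * t : ℝ) : ℂ)) • f' t‖ := by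
        rw [← two_mul_smul_integral_cos_smul k hf, norm_smul, norm_mul, Complex.norm_ofNat]
    _ ≤ exp (|k.im| * x) * (‖f x‖ + ‖f 0‖) + exp (|k.im| * x) * ∫ t in (0 : ℝ)..x, ‖f' t‖ := by
        refine (norm_add_le _ _).trans (add_le_add ?_ hint)
        rw [norm_smul]
        gcongr
        exact norm_add_le _ _
    _ = (‖f x‖ + ‖f 0‖ + ∫ t in (0 : ℝ)..x, ‖f' t‖) * exp (|k.im| * x) := by ring

theorem exists_contDiff_integral_norm_sub_le {E : Type*} [NormedAddCommGroup E] [NormedSpace ℝ E]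
    {f : ℝ → E} {a b ε : ℝ} (hab : a ≤ b) (hf : IntervalIntegrable f volume a b) (hε : 0 < ε) :
    ∃ g : ℝ → E, ContDiff ℝ ∞ g ∧ ∫ t in a..b, ‖f t - g t‖ ≤ ε := by
  have hL1 : MemLp f 1 (volume.restrict (Set.Ioc a b)) := memLp_one_iff_integrable.2 hf.1
  obtain ⟨g, -, hg, hfg⟩ := hL1.exist_eLpNorm_sub_le ENNReal.one_ne_top le_rfl hε
  refine ⟨g, hg, ?_⟩
  have hmeas : AEStronglyMeasurable (f - g) (volume.restrict (Set.Ioc a b)) :=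
    hL1.aestronglyMeasurable.sub hg.continuous.aestronglyMeasurable
  calc ∫ t in a..b, ‖f t - g t‖ = (eLpNorm (f - g) 1 (volume.restrict (Set.Ioc a b))).toReal := by
        rw [integral_of_le hab, eLpNorm_one_eq_lintegral_enorm,
          ← integral_norm_eq_lintegral_enorm hmeas]
        rfl
    _ ≤ ε := ENNReal.toReal_le_of_le_ofReal hε.le hfg

theorem eventually_norm_integral_cos_smul_le_of_contDiff {g : ℝ → E} (hg : ContDiff ℝ 1 g)
    (ℓ : ℝ) {ε : ℝ} (hε : 0 < ε) :
    ∀ᶠ k in cobounded ℂ, ∀ x ∈ Set.Icc 0 ℓ,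
      ‖∫ t in (0 : ℝ)..x, Complex.cos (k * ((x - 2 * t : ℝ) : ℂ)) • g t‖
        ≤ ε * exp (|k.im| * x) := by
  have hg' : Continuous (deriv g) := hg.continuous_deriv le_rfl
  obtain ⟨M, hM⟩ := isCompact_Icc.exists_bound_of_continuousOn
    (f := fun x => ‖g x‖ + ‖g 0‖ + ∫ t in (0 : ℝ)..x, ‖deriv g t‖) (s := Set.Icc 0 ℓ) <|
      Continuous.continuousOn (by
        have := continuous_primitive (μ := volume)
          (fun _ _ => hg'.norm.intervalIntegrable _ _) 0
        have := hg.continuous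
        fun_prop)
  filter_upwards [tendsto_norm_cobounded_atTop.eventually_ge_atTop (M / (2 * ε)),
    tendsto_norm_cobounded_atTop.eventually_gt_atTop 0] with k hk hk0 x hx
  have hprim : IsPrimitiveOn g (deriv g) 0 x :=
    .of_hasDerivAt (fun t => (hg.differentiable one_ne_zero t).hasDerivAt) hg'
  rw [div_le_iff₀ (by positivity)] at hk
  have hbound := two_mul_norm_mul_norm_integral_cos_smul_le k hx.1 hprim
  refine le_of_mul_le_mul_left (hbound.trans ?_) (by positivity : 0 < 2 * ‖k‖)
  calc _ ≤ M * exp (|k.im| * x) := by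
        gcongr
        exact (le_abs_self _).trans (hM x hx)
    _ ≤ ‖k‖ * (2 * ε) * exp (|k.im| * x) := by gcongr
    _ = 2 * ‖k‖ * (ε * exp (|k.im| * x)) := by ring

theorem eventually_norm_integral_cos_smul_le {ℓ ε : ℝ} (hℓ : 0 ≤ ℓ)
    (hf : IntervalIntegrable f volume 0 ℓ) (hε : 0 < ε) :
    ∀ᶠ k in cobounded ℂ, ∀ x ∈ Set.Icc 0 ℓ,
      ‖∫ t in (0 : ℝ)..x, Complex.cos (k * ((x - 2 * t : ℝ) : ℂ)) • f t‖
        ≤ ε * exp (|k.im| * x) := by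
  obtain ⟨g, hg, hfg⟩ := exists_contDiff_integral_norm_sub_le hℓ hf (half_pos hε)
  filter_upwards [eventually_norm_integral_cos_smul_le_of_contDiff (hg.of_le (by simp)) ℓ
    (half_pos hε)] with k hgk x hx
  have hfx : IntervalIntegrable f volume 0 x :=
    hf.mono_set (Set.uIcc_subset_uIcc_left (Set.Icc_subset_uIcc hx))
  have hgx : IntervalIntegrable g volume 0 x := hg.continuous.intervalIntegrable 0 x
  have hcos : ContinuousOn (fun t : ℝ => Complex.cos (k * ((x - 2 * t : ℝ) : ℂ))) (Set.uIcc 0 x) :=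
    Continuous.continuousOn (by fun_prop)
  have hsub : ‖∫ t in (0 : ℝ)..x, Complex.cos (k * ((x - 2 * t : ℝ) : ℂ)) • (f t - g t)‖
      ≤ exp (|k.im| * x) * (ε / 2) := by
    refine (norm_intervalIntegral_smul_le hx.1 (hfx.sub hgx) fun t ht =>
      norm_cos_mul_ofReal_le k (abs_sub_two_mul_le ⟨ht.1.le, ht.2⟩)).trans ?_
    gcongr
    exact (integral_norm_le_of_mem_Icc (hf.sub (hg.continuous.intervalIntegrable 0 ℓ)) hx).trans hfg
  calc _ = ‖(∫ t in (0 : ℝ)..x, Complex.cos (k * ((x - 2 * t : ℝ) : ℂ)) • (f t - g t))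
        + ∫ t in (0 : ℝ)..x, Complex.cos (k * ((x - 2 * t : ℝ) : ℂ)) • g t‖ := by
        rw [← intervalIntegral.integral_add ((hfx.sub hgx).continuousOn_smul hcos)
          (hgx.continuousOn_smul hcos)]
        simp only [smul_sub, sub_add_cancel]
    _ ≤ exp (|k.im| * x) * (ε / 2) + ε / 2 * exp (|k.im| * x) :=
        (norm_add_le _ _).trans (add_le_add hsub (hgk x hx))
    _ = ε * exp (|k.im| * x) := by ring

end Oscillation

section Volterra

/-- The integral operator of the Volterra equation `u = cos (k ·) + volterraOp k q u`, which for
`k ≠ 0` encodes the initial value problem `u'' = (q - k ^ 2) u`, `u 0 = 1`, `u' 0 = 0`. -/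
noncomputable def volterraOp (k : ℂ) (q u : ℝ → ℂ) (x : ℝ) : ℂ :=
  ∫ t in (0 : ℝ)..x, Complex.sin (k * ((x : ℂ) - t)) / k * q t * u t

/-- The cosine-type solutions on `[0, ℓ]` of the Schrödinger equation with potential `q` and
spectral parameter `k`, encoded by the Volterra equation. -/
structure IsCosineSolution (k : ℂ) (q : ℝ → ℂ) (ℓ : ℝ) (u : ℝ → ℂ) : Prop where
  continuousOn : ContinuousOn u (Set.Icc 0 ℓ)
  eq_cos_add_volterraOp : ∀ x ∈ Set.Icc 0 ℓ, u x = Complex.cos (k * x) + volterraOp k q u x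

variable {k : ℂ} {q r u : ℝ → ℂ} {x ℓ : ℝ}

theorem intervalIntegrable_volterraOp (k : ℂ) (hq : IntervalIntegrable q volume 0 x)
    (hu : ContinuousOn u (Set.uIcc 0 x)) :
    IntervalIntegrable (fun t : ℝ => Complex.sin (k * ((x : ℂ) - t)) / k * q t * u t) volume 0 x :=
  (hq.continuousOn_mul (Continuous.continuousOn (by fun_prop))).mul_continuousOn hu

theorem norm_volterraOp_le (k : ℂ) {S : ℝ} (hx : 0 ≤ x) (hq : IntervalIntegrable q volume 0 x)
    (hr : ∀ t ∈ Set.Icc 0 x, ‖r t‖ ≤ S * exp (|k.im| * t)) :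
    ‖volterraOp k q r x‖ ≤ (∫ t in (0 : ℝ)..x, ‖q t‖) / ‖k‖ * S * exp (|k.im| * x) := by
  have hkernel (t : ℝ) (ht : t ∈ Set.Ioc 0 x) :
      ‖Complex.sin (k * ((x : ℂ) - t)) / k * r t‖ ≤ S * exp (|k.im| * x) / ‖k‖ := by
    have hsin : ‖Complex.sin (k * ((x : ℂ) - t))‖ ≤ exp (|k.im| * (x - t)) := by
      simpa only [Complex.ofReal_sub] using
        norm_sin_mul_ofReal_le k (abs_of_nonneg (sub_nonneg.2 ht.2)).le
    calc ‖Complex.sin (k * ((x : ℂ) - t)) / k * r t‖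
        ≤ exp (|k.im| * (x - t)) / ‖k‖ * (S * exp (|k.im| * t)) := by
          rw [norm_mul, norm_div]
          gcongr
          exact hr t ⟨ht.1.le, ht.2⟩
      _ = S * (exp (|k.im| * (x - t)) * exp (|k.im| * t)) / ‖k‖ := by ring
      _ = S * exp (|k.im| * x) / ‖k‖ := by rw [← exp_add]; ring_nf
  calc ‖volterraOp k q r x‖
      = ‖∫ t in (0 : ℝ)..x, (Complex.sin (k * ((x : ℂ) - t)) / k * r t) • q t‖ := by
        simp only [volterraOp, smul_eq_mul, mul_right_comm]
    _ ≤ S * exp (|k.im| * x) / ‖k‖ * ∫ t in (0 : ℝ)..x, ‖q t‖ :=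
        norm_intervalIntegral_smul_le hx hq hkernel
    _ = _ := by ring

theorem norm_le_of_eq_add_volterraOp {b : ℝ → ℂ} {B : ℝ} (hq : IntervalIntegrable q volume 0 ℓ)
    (hk : 0 < ‖k‖) (hqk : 2 * ∫ t in (0 : ℝ)..ℓ, ‖q t‖ ≤ ‖k‖)
    (hr : ContinuousOn r (Set.Icc 0 ℓ))
    (hb : ∀ t ∈ Set.Icc 0 ℓ, ‖b t‖ ≤ B * exp (|k.im| * t))
    (heq : ∀ t ∈ Set.Icc 0 ℓ, r t = b t + volterraOp k q r t) :
    ∀ t ∈ Set.Icc 0 ℓ, ‖r t‖ ≤ 2 * B * exp (|k.im| * t) := by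
  intro t ht
  have hweighted : ContinuousOn (fun s => ‖r s‖ / exp (|k.im| * s)) (Set.Icc 0 ℓ) :=
    hr.norm.div (by fun_prop) fun s _ => (exp_pos _).ne'
  obtain ⟨y, hy, hmax⟩ := isCompact_Icc.exists_isMaxOn ⟨t, ht⟩ hweighted
  set S := ‖r y‖ / exp (|k.im| * y) with hS
  have hrS : ∀ s ∈ Set.Icc 0 ℓ, ‖r s‖ ≤ S * exp (|k.im| * s) := fun s hs =>
    (div_le_iff₀ (exp_pos _)).1 (isMaxOn_iff.1 hmax s hs)
  have hV : ‖volterraOp k q r y‖ ≤ S / 2 * exp (|k.im| * y) := by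
    have hL : (∫ s in (0 : ℝ)..y, ‖q s‖) / ‖k‖ ≤ 1 / 2 := by
      rw [div_le_iff₀ hk]
      linarith [integral_norm_le_of_mem_Icc hq hy]
    calc ‖volterraOp k q r y‖
        ≤ (∫ s in (0 : ℝ)..y, ‖q s‖) / ‖k‖ * S * exp (|k.im| * y) :=
          norm_volterraOp_le k hy.1
            (hq.mono_set (Set.uIcc_subset_uIcc_left (Set.Icc_subset_uIcc hy)))
            fun s hs => hrS s ⟨hs.1, hs.2.trans hy.2⟩
      _ ≤ 1 / 2 * S * exp (|k.im| * y) := by gcongr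
      _ = S / 2 * exp (|k.im| * y) := by ring
  have hSB : S ≤ B + S / 2 := by
    rw [hS, div_le_iff₀ (exp_pos _), ← hS, heq y hy]
    linarith [norm_add_le (b y) (volterraOp k q r y), hb y hy]
  calc ‖r t‖ ≤ S * exp (|k.im| * t) := hrS t ht
    _ ≤ 2 * B * exp (|k.im| * t) := by gcongr; linarith

theorem volterraOp_sub (k : ℂ) {v : ℝ → ℂ} (hq : IntervalIntegrable q volume 0 x)
    (hu : ContinuousOn u (Set.uIcc 0 x)) (hv : ContinuousOn v (Set.uIcc 0 x)) :
    volterraOp k q (fun t => u t - v t) x = volterraOp k q u x - volterraOp k q v x := by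
  simp only [volterraOp]
  rw [← integral_sub (intervalIntegrable_volterraOp k hq hu)
    (intervalIntegrable_volterraOp k hq hv)]
  simp only [← mul_sub]

end Volterra

section Asymptotics

open Bornology Filter

/-- The expansion of the cosine-type solution modulo `O(k⁻²)`. -/
noncomputable def firstOrderApprox (k : ℂ) (q : ℝ → ℂ) (x : ℝ) : ℂ :=
  Complex.cos (k * x) + Complex.sin (k * x) / k * (1 / 2 * ∫ t in (0 : ℝ)..x, q t)

/-- The coefficient of `cos (k x) / k ^ 2` in the expansion of the cosine-type solution. -/
noncomputable def secondOrderCoeff (q : ℝ → ℂ) (x : ℝ) : ℂ :=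
  1 / 4 * (q x - q 0) - 1 / 8 * (∫ t in (0 : ℝ)..x, q t) ^ 2

/-- The part of `volterraOp k q (firstOrderApprox k q)` that is `o(k⁻²)`, by the Riemann–Lebesgue
lemma for the merely integrable density `q * ∫ q - q'`. -/
noncomputable def oscillatoryRemainder (k : ℂ) (q q' : ℝ → ℂ) (x : ℝ) : ℂ :=
  1 / (4 * k ^ 2) * ∫ t in (0 : ℝ)..x,
    Complex.cos (k * ((x - 2 * t : ℝ) : ℂ)) • (q t * (∫ s in (0 : ℝ)..t, q s) - q' t)

variable {k : ℂ} {q q' u : ℝ → ℂ} {x ℓ : ℝ}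

theorem integral_mul_integral_left {a b : ℝ} (hq : IntervalIntegrable q volume a b) :
    ∫ t in a..b, q t * ∫ s in a..t, q s = (∫ t in a..b, q t) ^ 2 / 2 := by
  have hQ := IsPrimitiveOn.integral_left hq
  have hparts := hQ.integral_deriv_smul hQ
  simp only [smul_eq_mul, integral_same, mul_zero, sub_zero,
    mul_comm (∫ s in a.._, q s) (q _)] at hparts
  linear_combination hparts / 2

theorem sin_mul_sub_mul_cos_mul (k x t : ℂ) :
    Complex.sin (k * (x - t)) * Complex.cos (k * t)
      = (Complex.sin (k * x) + Complex.sin (k * (x - 2 * t))) / 2 := by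
  rw [show k * x = k * (x - t) + k * t by ring,
    show k * (x - 2 * t) = k * (x - t) - k * t by ring, Complex.sin_add, Complex.sin_sub]
  ring

theorem sin_mul_sub_mul_sin_mul (k x t : ℂ) :
    Complex.sin (k * (x - t)) * Complex.sin (k * t)
      = (Complex.cos (k * (x - 2 * t)) - Complex.cos (k * x)) / 2 := by
  rw [show k * x = k * (x - t) + k * t by ring,
    show k * (x - 2 * t) = k * (x - t) - k * t by ring, Complex.cos_add, Complex.cos_sub]
  ring

theorem continuousOn_firstOrderApprox (k : ℂ) (hq : IntervalIntegrable q volume 0 x) :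
    ContinuousOn (firstOrderApprox k q) (Set.uIcc 0 x) := by
  have hQ := (IsPrimitiveOn.integral_left hq).continuousOn
  unfold firstOrderApprox
  fun_prop

theorem continuousOn_secondOrderCoeff (hq : IsPrimitiveOn q q' 0 x) :
    ContinuousOn (secondOrderCoeff q) (Set.uIcc 0 x) := by
  have hq₀ := hq.continuousOn
  have hQ := (IsPrimitiveOn.integral_left hq₀.intervalIntegrable).continuousOn
  unfold secondOrderCoeff
  fun_prop

theorem intervalIntegrable_mul_integral_sub (hq : IsPrimitiveOn q q' 0 x) :
    IntervalIntegrable (fun t => q t * (∫ s in (0 : ℝ)..t, q s) - q' t) volume 0 x :=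
  have hqi : IntervalIntegrable q volume 0 x := hq.continuousOn.intervalIntegrable
  (hqi.mul_continuousOn (IsPrimitiveOn.integral_left hqi).continuousOn).sub hq.intervalIntegrable

theorem volterraOp_firstOrderApprox_eq_integral (k : ℂ) (hq : IntervalIntegrable q volume 0 x) :
    volterraOp k q (firstOrderApprox k q) x
      = 1 / (2 * k) * (Complex.sin (k * x) * (∫ t in (0 : ℝ)..x, q t)
          + ∫ t in (0 : ℝ)..x, Complex.sin (k * ((x - 2 * t : ℝ) : ℂ)) • q t)
        + 1 / (4 * k ^ 2) * ((∫ t in (0 : ℝ)..x, Complex.cos (k * ((x - 2 * t : ℝ) : ℂ)) •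
            (q t * ∫ s in (0 : ℝ)..t, q s)) - Complex.cos (k * x) *
              ∫ t in (0 : ℝ)..x, q t * ∫ s in (0 : ℝ)..t, q s) := by
  have hqQ : IntervalIntegrable (fun t => q t * ∫ s in (0 : ℝ)..t, q s) volume 0 x :=
    hq.mul_continuousOn (IsPrimitiveOn.integral_left hq).continuousOn
  have hsin : IntervalIntegrable (fun t => Complex.sin (k * ((x - 2 * t : ℝ) : ℂ)) • q t)
      volume 0 x := hq.continuousOn_smul (Continuous.continuousOn (by fun_prop))
  have hcos : IntervalIntegrable (fun t => Complex.cos (k * ((x - 2 * t : ℝ) : ℂ)) •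
      (q t * ∫ s in (0 : ℝ)..t, q s)) volume 0 x :=
    hqQ.continuousOn_smul (Continuous.continuousOn (by fun_prop))
  rw [← intervalIntegral.integral_const_mul, ← intervalIntegral.integral_const_mul,
    ← integral_add (hq.const_mul _) hsin, ← integral_sub hcos (hqQ.const_mul _),
    ← intervalIntegral.integral_const_mul, ← intervalIntegral.integral_const_mul,
    ← integral_add (((hq.const_mul _).add hsin).const_mul _)
      ((hcos.sub (hqQ.const_mul _)).const_mul _)]
  refine integral_congr fun t _ => ?_
  simp only [firstOrderApprox, smul_eq_mul]
  push_cast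
  linear_combination q t / k * sin_mul_sub_mul_cos_mul k x t
    + q t / (2 * k ^ 2) * (∫ s in (0 : ℝ)..t, q s) * sin_mul_sub_mul_sin_mul k x t

theorem volterraOp_firstOrderApprox_eq (hk : k ≠ 0) (hq : IsPrimitiveOn q q' 0 x) :
    volterraOp k q (firstOrderApprox k q) x
      = Complex.sin (k * x) / k * (1 / 2 * ∫ t in (0 : ℝ)..x, q t)
        + Complex.cos (k * x) / k ^ 2 * secondOrderCoeff q x + oscillatoryRemainder k q q' x := by
  have hqi : IntervalIntegrable q volume 0 x := hq.continuousOn.intervalIntegrable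
  have hqQ : IntervalIntegrable (fun t => q t * ∫ s in (0 : ℝ)..t, q s) volume 0 x :=
    hqi.mul_continuousOn (IsPrimitiveOn.integral_left hqi).continuousOn
  have hcos : ContinuousOn (fun t : ℝ => Complex.cos (k * ((x - 2 * t : ℝ) : ℂ))) (Set.uIcc 0 x) :=
    Continuous.continuousOn (by fun_prop)
  have hparts := two_mul_smul_integral_sin_smul k hq
  rw [volterraOp_firstOrderApprox_eq_integral k hqi, integral_mul_integral_left hqi,
    oscillatoryRemainder, secondOrderCoeff]
  simp only [smul_sub]
  rw [integral_sub (hqQ.continuousOn_smul hcos) (hq.intervalIntegrable.continuousOn_smul hcos)]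
  simp only [smul_eq_mul] at hparts ⊢
  field_simp
  linear_combination 16 * hparts

namespace IsCosineSolution

theorem sub_firstOrderApprox_eq (hu : IsCosineSolution k q ℓ u) (hk : k ≠ 0)
    (hq : IsPrimitiveOn q q' 0 ℓ) (hx : x ∈ Set.Icc 0 ℓ) :
    u x - firstOrderApprox k q x
      = Complex.cos (k * x) / k ^ 2 * secondOrderCoeff q x + oscillatoryRemainder k q q' x
        + volterraOp k q (fun t => u t - firstOrderApprox k q t) x := by
  have hqx : IsPrimitiveOn q q' 0 x := hq.mono (Set.Icc_subset_uIcc hx)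
  have hqi : IntervalIntegrable q volume 0 x := hqx.continuousOn.intervalIntegrable
  have hux : ContinuousOn u (Set.uIcc 0 x) := hu.continuousOn.mono <| by
    rw [Set.uIcc_of_le hx.1]
    exact Set.Icc_subset_Icc_right hx.2
  rw [volterraOp_sub k hqi hux (continuousOn_firstOrderApprox k hqi),
    volterraOp_firstOrderApprox_eq hk hqx, hu.eq_cos_add_volterraOp x hx, firstOrderApprox]
  ring

theorem norm_sub_approx_le (hu : IsCosineSolution k q ℓ u) (hk : 0 < ‖k‖)
    (hq : IsPrimitiveOn q q' 0 ℓ) (hqk : 2 * ∫ t in (0 : ℝ)..ℓ, ‖q t‖ ≤ ‖k‖) {N δ : ℝ}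
    (hN : ∀ x ∈ Set.Icc 0 ℓ, ‖secondOrderCoeff q x‖ ≤ N)
    (hδ : ∀ x ∈ Set.Icc 0 ℓ, ‖oscillatoryRemainder k q q' x‖ ≤ δ / ‖k‖ ^ 2 * exp (|k.im| * x))
    (hx : x ∈ Set.Icc 0 ℓ) :
    ‖u x - firstOrderApprox k q x - Complex.cos (k * x) / k ^ 2 * secondOrderCoeff q x‖
      ≤ (δ + 2 * (∫ t in (0 : ℝ)..ℓ, ‖q t‖) * (N + δ) / ‖k‖) * exp (|k.im| * x) / ‖k‖ ^ 2 := by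
  have hqi : IntervalIntegrable q volume 0 ℓ := hq.continuousOn.intervalIntegrable
  have hforcing : ∀ t ∈ Set.Icc 0 ℓ,
      ‖Complex.cos (k * t) / k ^ 2 * secondOrderCoeff q t + oscillatoryRemainder k q q' t‖
        ≤ (N + δ) / ‖k‖ ^ 2 * exp (|k.im| * t) := fun t ht => by
    calc _ ≤ ‖Complex.cos (k * t)‖ / ‖k‖ ^ 2 * ‖secondOrderCoeff q t‖
          + ‖oscillatoryRemainder k q q' t‖ := by
          rw [← norm_pow, ← norm_div, ← norm_mul]
          exact norm_add_le _ _
      _ ≤ exp (|k.im| * t) / ‖k‖ ^ 2 * N + δ / ‖k‖ ^ 2 * exp (|k.im| * t) := by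
          gcongr
          · exact norm_cos_mul_ofReal_le k (abs_of_nonneg ht.1).le
          · exact hN t ht
          · exact hδ t ht
      _ = (N + δ) / ‖k‖ ^ 2 * exp (|k.im| * t) := by ring
  have hcont : ContinuousOn (fun t => u t - firstOrderApprox k q t) (Set.Icc 0 ℓ) :=
    hu.continuousOn.sub ((continuousOn_firstOrderApprox k hqi).mono Set.Icc_subset_uIcc)
  have hresidual := norm_le_of_eq_add_volterraOp hqi hk hqk hcont hforcing
    fun t ht => hu.sub_firstOrderApprox_eq (norm_pos_iff.1 hk) hq ht
  have hNδ : 0 ≤ 2 * ((N + δ) / ‖k‖ ^ 2) :=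
    nonneg_of_mul_nonneg_left ((norm_nonneg _).trans (hresidual x hx)) (exp_pos _)
  calc _ = ‖oscillatoryRemainder k q q' x
          + volterraOp k q (fun t => u t - firstOrderApprox k q t) x‖ := by
        rw [hu.sub_firstOrderApprox_eq (norm_pos_iff.1 hk) hq hx]
        ring_nf
    _ ≤ δ / ‖k‖ ^ 2 * exp (|k.im| * x) + (∫ t in (0 : ℝ)..x, ‖q t‖) / ‖k‖
          * (2 * ((N + δ) / ‖k‖ ^ 2)) * exp (|k.im| * x) :=
        (norm_add_le _ _).trans <| add_le_add (hδ x hx) <| norm_volterraOp_le k hx.1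
          (hq.mono (Set.Icc_subset_uIcc hx)).continuousOn.intervalIntegrable
          fun t ht => hresidual t ⟨ht.1, ht.2.trans hx.2⟩
    _ ≤ δ / ‖k‖ ^ 2 * exp (|k.im| * x) + (∫ t in (0 : ℝ)..ℓ, ‖q t‖) / ‖k‖
          * (2 * ((N + δ) / ‖k‖ ^ 2)) * exp (|k.im| * x) := by
        gcongr
        exact integral_norm_le_of_mem_Icc hqi hx
    _ = _ := by ring

end IsCosineSolution

theorem eventually_norm_oscillatoryRemainder_le (hℓ : 0 ≤ ℓ) (hq : IsPrimitiveOn q q' 0 ℓ)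
    {ε : ℝ} (hε : 0 < ε) :
    ∀ᶠ k in cobounded ℂ, ∀ x ∈ Set.Icc 0 ℓ,
      ‖oscillatoryRemainder k q q' x‖ ≤ ε / ‖k‖ ^ 2 * exp (|k.im| * x) := by
  filter_upwards [eventually_norm_integral_cos_smul_le hℓ (intervalIntegrable_mul_integral_sub hq)
    (mul_pos four_pos hε)] with k hk x hx
  rw [oscillatoryRemainder, norm_mul]
  calc _ ≤ ‖1 / (4 * k ^ 2)‖ * (4 * ε * exp (|k.im| * x)) := by
        gcongr
        exact hk x hx
    _ = ε / ‖k‖ ^ 2 * exp (|k.im| * x) := by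
        rw [norm_div, norm_mul, norm_one, norm_pow, Complex.norm_ofNat]
        ring

theorem eventually_norm_sub_approx_le (hℓ : 0 ≤ ℓ) (hq : IsPrimitiveOn q q' 0 ℓ)
    {ε : ℝ} (hε : 0 < ε) :
    ∀ᶠ k in cobounded ℂ, ∀ u, IsCosineSolution k q ℓ u → ∀ x ∈ Set.Icc 0 ℓ,
      ‖u x - firstOrderApprox k q x - Complex.cos (k * x) / k ^ 2 * secondOrderCoeff q x‖
        ≤ ε * exp (|k.im| * x) / ‖k‖ ^ 2 := by
  obtain ⟨N, hN⟩ := isCompact_Icc.exists_bound_of_continuousOn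
    ((continuousOn_secondOrderCoeff hq).mono Set.Icc_subset_uIcc)
  set L := ∫ t in (0 : ℝ)..ℓ, ‖q t‖
  have hnorm := tendsto_norm_cobounded_atTop (E := ℂ)
  filter_upwards [eventually_norm_oscillatoryRemainder_le hℓ hq (half_pos hε),
    hnorm.eventually_gt_atTop 0, hnorm.eventually_ge_atTop (2 * L),
    hnorm.eventually_ge_atTop (2 * L * (N + ε / 2) / (ε / 2))] with k hδ hk hqk hkε u hu x hx
  have hsmall : 2 * L * (N + ε / 2) / ‖k‖ ≤ ε / 2 := (div_le_comm₀ (half_pos hε) hk).1 hkε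
  refine (hu.norm_sub_approx_le hk hq hqk hN hδ hx).trans ?_
  gcongr
  linarith

theorem gelfand_levitan_c_asymptotics_general (hℓ : 0 ≤ ℓ) (hq : IsPrimitiveOn q q' 0 ℓ) :
    ∀ ε > 0, ∃ K > 0, ∀ k : ℂ, K ≤ ‖k‖ → ∀ u, IsCosineSolution k q ℓ u →
      ∀ x ∈ Set.Icc (0 : ℝ) ℓ,
        ‖u x - Complex.cos (k * x)
            - (Complex.sin (k * x) / k) * ((1 / 2 : ℂ) * ∫ t in (0 : ℝ)..x, q t)
            - (Complex.cos (k * x) / k ^ 2) *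
                ((1 / 4 : ℂ) * (q x - q 0) - (1 / 8 : ℂ) * (∫ t in (0 : ℝ)..x, q t) ^ 2)‖
          ≤ ε * exp (|k.im| * x) / ‖k‖ ^ 2 := by
  intro ε hε
  obtain ⟨K, -, hK⟩ := hasBasis_cobounded_norm.eventually_iff.1
    (eventually_norm_sub_approx_le hℓ hq hε)
  refine ⟨max K 1, by positivity, fun k hk u hu x hx => ?_⟩
  rw [sub_sub (u x)]
  exact hK ((le_max_left _ _).trans hk) u hu x hx

end Asymptotics

/-- Asymptotics of the solution `c(·, k)` of the Volterra integral equation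
`c(x,k) = cos(kx) + ∫₀ˣ (sin(k(x−t))/k) q(t) c(t,k) dt` on `[0, ℓ]`, where the potential
`q` is absolutely continuous with derivative `q' ∈ L¹((0,ℓ))`. -/
theorem gelfand_levitan_c_asymptotics
    (ℓ : ℝ) (hℓ : 0 < ℓ) (q q' : ℝ → ℝ)
    (hq' : IntervalIntegrable q' volume 0 ℓ)
    (hq : ∀ x ∈ Set.Icc (0 : ℝ) ℓ, q x = q 0 + ∫ t in (0 : ℝ)..x, q' t)
    (c : ℂ → ℝ → ℂ)
    (hccont : ∀ k : ℂ, k ≠ 0 → ContinuousOn (c k) (Set.Icc 0 ℓ))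
    (hc : ∀ k : ℂ, k ≠ 0 → ∀ x ∈ Set.Icc (0 : ℝ) ℓ,
      c k x = Complex.cos (k * x) +
        ∫ t in (0 : ℝ)..x, (Complex.sin (k * ((x : ℂ) - t)) / k) * (q t : ℂ) * c k t) :
    ∀ ε > 0, ∃ K > 0, ∀ k : ℂ, K ≤ ‖k‖ → ∀ x ∈ Set.Icc (0 : ℝ) ℓ,
      ‖c k x - Complex.cos (k * x)
          - (Complex.sin (k * x) / k) * ((1 / 2 : ℂ) * ∫ t in (0 : ℝ)..x, (q t : ℂ))
          - (Complex.cos (k * x) / k ^ 2) *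
              ((1 / 4 : ℂ) * ((q x : ℂ) - (q 0 : ℂ))
                - (1 / 8 : ℂ) * (∫ t in (0 : ℝ)..x, (q t : ℂ)) ^ 2)‖
        ≤ ε * Real.exp (|k.im| * x) / ‖k‖ ^ 2 := by
  intro ε hε
  have hprim : IsPrimitiveOn q q' 0 ℓ := ⟨hq', by rwa [Set.uIcc_of_le hℓ.le]⟩
  obtain ⟨K, hK, hbound⟩ := gelfand_levitan_c_asymptotics_general hℓ.le hprim.ofReal ε hε
  refine ⟨K, hK, fun k hk => ?_⟩
  have hk0 : k ≠ 0 := norm_pos_iff.1 (hK.trans_le hk)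
  exact hbound k hk (c k) ⟨hccont k hk0, hc k hk0⟩
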